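/- Let U ⊆ ℂ² be open, F : U → ℂ holomorphic with (∂F/∂x, ∂F/∂y) ≠ (0,0) at every point of U, and ω = (P,Q) a holomorphic 1-form on U. Let k ≥ 1 and let G₁,…,G_k, R₁,…,R_k be holomorphic functions on U. Define on U × ℂ: G = 1 + Σ_{i=1}^{k} ε^i G_i, A = G·(∂F/∂x + εP), B = G·(∂F/∂y + εQ), C = Σ_{i=1}^{k} ε^{i−1} R_i, Ω = (A,B,C). Assume that the integrability coefficient ⟨Ω ∧ dΩ⟩ has identically vanishing coefficient of ε^n for every n ≤ k − 1. Then there exist a Françoise sequence (g_i, r_i), 1 ≤ i ≤ k, for dF + εω and holomorphic functions n₁,…,n_k on U such that, setting N = 1 + Σ_{i=1}^{k} ε^i n_i and F_ε = F + Σ_{i=1}^{k} (−1)^{i+1} ε^i r_i, the following congruences of polynomials in ε hold on U: A ≡ N·∂F_ε/∂x and B ≡ N·∂F_ε/∂y modulo ε^{k+1}, and C ≡ N·∂F_ε/∂ε modulo ε^{k}. -/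

import Mathlib

/-!
Holomorphic functions on `U` form a ring with two commuting derivations `∂/∂x`, `∂/∂y`, in which
every `(a, b)` with `∂F/∂x * b = ∂F/∂y * a` is a holomorphic multiple of `(∂F/∂x, ∂F/∂y)`. Over such
a ring an integrating factor `M` of `Ω` and a potential `Φ`, with `M Ω ≡ dΦ`, are built order by
order in `ε`: the `ε`-component determines the next coefficient of `Φ`, and then integrability says
that the next error in the space components has vanishing wedge product with `dF`, hence is a
multiple of `dF`, which the next coefficient of `M` absorbs. The truncated inverse of `M` is the
unit `N`, and the coefficients of `M G` and `Φ`, with alternating signs, satisfy the Françoise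
relations because `M G (dF + ε ω) ≡ dΦ`.
-/

/-- ∂/∂x of a function on ℂ². -/
noncomputable def pdx (f : ℂ × ℂ → ℂ) (p : ℂ × ℂ) : ℂ := fderiv ℂ f p (1, 0)

/-- ∂/∂y of a function on ℂ². -/
noncomputable def pdy (f : ℂ × ℂ → ℂ) (p : ℂ × ℂ) : ℂ := fderiv ℂ f p (0, 1)

/-- The integrability coefficient ⟨Ω ∧ dΩ⟩ of the 1-form Ω = A dx + B dy + C dε on
ℂ² × ℂ (coordinates (x,y,ε)), namely
A·(∂C/∂y − ∂B/∂ε) + B·(∂A/∂ε − ∂C/∂x) + C·(∂B/∂x − ∂A/∂y). -/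
noncomputable def intCoeff (A B C : ℂ × ℂ → ℂ → ℂ) (p : ℂ × ℂ) (ε : ℂ) : ℂ :=
  A p ε * (pdy (fun q => C q ε) p - deriv (fun e => B p e) ε) +
  B p ε * (deriv (fun e => A p e) ε - pdx (fun q => C q ε) p) +
  C p ε * (pdx (fun q => B q ε) p - pdy (fun q => A q ε) p)

/-- G = 1 + Σ_{i=1}^{k} ε^i G_i. -/
noncomputable def GserGV (k : ℕ) (G : ℕ → ℂ × ℂ → ℂ) (q : ℂ × ℂ) (e : ℂ) : ℂ :=
  1 + ∑ i ∈ Finset.Icc 1 k, e ^ i * G i q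

/-- C = Σ_{i=1}^{k} ε^{i−1} R_i. -/
noncomputable def CserGV (k : ℕ) (R : ℕ → ℂ × ℂ → ℂ) (q : ℂ × ℂ) (e : ℂ) : ℂ :=
  ∑ i ∈ Finset.Icc 1 k, e ^ (i - 1) * R i q

/-- F_ε = F + Σ_{i=1}^{k} (−1)^{i+1} ε^i r_i. -/
noncomputable def Feps (k : ℕ) (F : ℂ × ℂ → ℂ) (r : ℕ → ℂ × ℂ → ℂ) (e : ℂ)
    (q : ℂ × ℂ) : ℂ :=
  F q + ∑ i ∈ Finset.Icc 1 k, (-1 : ℂ) ^ (i + 1) * e ^ i * r i q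

open Polynomial TopologicalSpace

section CoefficientwiseDerivation

variable {R K : Type*} [CommRing R] [CommRing K] [Algebra R K]

/-- The derivation of `K[X]` that applies `D` to each coefficient: with `X` in the role of the
parameter `ε`, it is the derivation `D` of the space variables, for which `ε` is constant. -/
noncomputable def coeffDerivation (D : Derivation R K K) : Derivation R K[X] K[X] :=
  (PolynomialModule.equivPolynomialSelf (R := K)).toLinearMap.compDer D.mapCoeffs

lemma coeff_coeffDerivation (D : Derivation R K K) (p : K[X]) (n : ℕ) :
    (coeffDerivation D p).coeff n = D (p.coeff n) := rfl

lemma coeffDerivation_C (D : Derivation R K K) (a : K) :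
    coeffDerivation D (C a) = C (D a) := by
  ext n
  simp only [coeff_coeffDerivation, coeff_C]
  split_ifs <;> simp

lemma coeffDerivation_X_pow_mul (D : Derivation R K K) (m : ℕ) (p : K[X]) :
    coeffDerivation D (X ^ m * p) = X ^ m * coeffDerivation D p := by
  ext n
  simp only [coeff_coeffDerivation, coeff_X_pow_mul']
  split_ifs <;> simp

lemma X_pow_dvd_coeffDerivation (D : Derivation R K K) {m : ℕ} {p : K[X]} (h : X ^ m ∣ p) :
    X ^ m ∣ coeffDerivation D p := by
  obtain ⟨q, rfl⟩ := h
  exact ⟨coeffDerivation D q, coeffDerivation_X_pow_mul D m q⟩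

lemma coeffDerivation_derivative (D : Derivation R K K) (p : K[X]) :
    coeffDerivation D (derivative p) = derivative (coeffDerivation D p) := by
  ext n
  have hn : D ((n : K) + 1) = 0 := by exact_mod_cast D.map_natCast (n + 1)
  simp [coeff_coeffDerivation, coeff_derivative, hn, mul_comm]

lemma coeffDerivation_comm {D D' : Derivation R K K} (h : ∀ a, D (D' a) = D' (D a)) (p : K[X]) :
    coeffDerivation D (coeffDerivation D' p) = coeffDerivation D' (coeffDerivation D p) := by
  ext n
  simp only [coeff_coeffDerivation, h]

lemma eval_algebraMap_coeffDerivation (D : Derivation R K K) (p : K[X]) (c : R) :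
    (coeffDerivation D p).eval (algebraMap R K c) = D (p.eval (algebraMap R K c)) := by
  induction p using Polynomial.induction_on' with
  | add p q hp hq => simp only [map_add, eval_add, hp, hq]
  | monomial n a =>
    rw [← C_mul_X_pow_eq_monomial, mul_comm, coeffDerivation_X_pow_mul, coeffDerivation_C]
    simp only [eval_mul, eval_pow, eval_X, eval_C, ← map_pow, Derivation.leibniz,
      Derivation.map_algebraMap, smul_eq_mul, mul_zero, add_zero]

end CoefficientwiseDerivation

section IntegratingFactor

variable {R K : Type*} [CommRing R] [CommRing K] [Algebra R K] {Dx Dy : Derivation R K K}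

/-- The integrability coefficient `⟨Θ ∧ dΘ⟩` of the 1-form `Θ = (A, B, C)` over `K[X]`; the
partial derivatives in `x` and `y` are `Dx` and `Dy`, applied coefficientwise, and `X` is the
variable `ε`. -/
noncomputable def polyIntCoeff (Dx Dy : Derivation R K K) (A B C : K[X]) : K[X] :=
  A * (coeffDerivation Dy C - derivative B) + B * (derivative A - coeffDerivation Dx C) +
    C * (coeffDerivation Dx B - coeffDerivation Dy A)

lemma polyIntCoeff_mul (M A B C : K[X]) :
    polyIntCoeff Dx Dy (M * A) (M * B) (M * C) = M ^ 2 * polyIntCoeff Dx Dy A B C := by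
  simp only [polyIntCoeff, Derivation.leibniz, derivative_mul, smul_eq_mul]
  ring

/-- A total differential is integrable, so only the perturbation contributes, and only `∂/∂ε`
lowers its order to `n`. -/
lemma X_pow_succ_dvd_polyIntCoeff_sub (hcomm : ∀ a, Dx (Dy a) = Dy (Dx a)) (Φ a b c : K[X])
    (n : ℕ) :
    X ^ (n + 1) ∣ polyIntCoeff Dx Dy (coeffDerivation Dx Φ - X ^ (n + 1) * a)
        (coeffDerivation Dy Φ - X ^ (n + 1) * b) (derivative Φ - X ^ (n + 1) * c) -
      X ^ n * (((n : K[X]) + 1) * (coeffDerivation Dx Φ * b - coeffDerivation Dy Φ * a)) := by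
  refine ⟨-(coeffDerivation Dx Φ - X ^ (n + 1) * a) * (coeffDerivation Dy c - derivative b) -
    (coeffDerivation Dy Φ - X ^ (n + 1) * b) * (derivative a - coeffDerivation Dx c) -
    (derivative Φ - X ^ (n + 1) * c) * (coeffDerivation Dx b - coeffDerivation Dy a), ?_⟩
  simp only [polyIntCoeff, map_sub, coeffDerivation_X_pow_mul, coeffDerivation_derivative,
    coeffDerivation_comm hcomm, derivative_mul, derivative_X_pow_succ, map_add, map_natCast,
    map_one]
  ring

/-- The 1-form `(A, B, C)` over `K[X]` has the integrating factor `M` with potential `Φ`, that is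
`M • (A, B, C) = dΦ`, modulo `X ^ m` in the two space components and modulo `X ^ n` in the
parameter component. Separate orders are needed because `∂/∂ε` lowers orders by one. -/
structure IsIntegratingFactor (Dx Dy : Derivation R K K) (A B C : K[X]) (m n : ℕ)
    (M Φ : K[X]) : Prop where
  x : X ^ m ∣ coeffDerivation Dx Φ - M * A
  y : X ^ m ∣ coeffDerivation Dy Φ - M * B
  param : X ^ n ∣ derivative Φ - M * C

/-- The division property of the covector `(u, v)` in rank two: every covector whose wedge product
with `(u, v)` vanishes is a multiple of it. -/
def HasDivisionProperty (u v : K) : Prop :=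
  ∀ a b : K, u * b = v * a → ∃ l, a = l * u ∧ b = l * v

lemma hasDivisionProperty_of_ne_zero {k : Type*} [Field k] {u v : k} (h : (u, v) ≠ (0, 0)) :
    HasDivisionProperty u v := by
  intro a b hab
  by_cases hu : u = 0
  · have hv : v ≠ 0 := fun hv => h (Prod.ext hu hv)
    refine ⟨b / v, ?_, (div_mul_cancel₀ b hv).symm⟩
    simpa [hu, hv] using hab
  · refine ⟨a / u, (div_mul_cancel₀ a hu).symm, ?_⟩
    field_simp
    linear_combination hab

lemma coeff_zero_eq_of_X_pow_succ_dvd {D : Derivation R K K} {A M Φ : K[X]} {n : ℕ}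
    (hM : M.coeff 0 = 1) (h : X ^ (n + 1) ∣ coeffDerivation D Φ - M * A) :
    A.coeff 0 = D (Φ.coeff 0) := by
  have h0 := X_pow_dvd_iff.1 h 0 n.succ_pos
  rw [coeff_sub, coeff_coeffDerivation, mul_coeff_zero, hM, one_mul] at h0
  exact (sub_eq_zero.1 h0).symm

lemma X_pow_succ_dvd_X_pow_mul_iff {p : K[X]} {n : ℕ} :
    X ^ (n + 1) ∣ X ^ n * p ↔ p.coeff 0 = 0 := by
  refine ⟨fun h => ?_, fun h => mul_dvd_mul_left _ (X_dvd_iff.2 h)⟩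
  simpa [coeff_X_pow_mul'] using X_pow_dvd_iff.1 h n n.lt_succ_self

lemma isUnit_natCast_add_one (𝕜 K : Type*) [Field 𝕜] [CharZero 𝕜] [CommRing K] [Algebra 𝕜 K]
    (n : ℕ) : IsUnit (n + 1 : K) := by
  simpa using (Nat.cast_add_one_ne_zero (R := 𝕜) n).isUnit.map (algebraMap 𝕜 K)

variable {𝕜 : Type*} [Field 𝕜] [CharZero 𝕜] [Algebra 𝕜 K]

variable {Dx Dy : Derivation 𝕜 K K} {A B C M Φ : K[X]} {n : ℕ}

lemma IsIntegratingFactor.exists_add_potential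
    (h : IsIntegratingFactor Dx Dy A B C (n + 1) n M Φ) :
    ∃ s : K, IsIntegratingFactor Dx Dy A B C (n + 1) (n + 1) M
      (Φ + X ^ (n + 1) * Polynomial.C s) := by
  obtain ⟨c, hc⟩ := h.param
  obtain ⟨s, hs⟩ : (n + 1 : K) ∣ -c.coeff 0 := (isUnit_natCast_add_one 𝕜 K n).dvd
  refine ⟨s, ?_, ?_, ?_⟩
  · rw [map_add, coeffDerivation_X_pow_mul, add_sub_right_comm]
    exact h.x.add (dvd_mul_right _ _)
  · rw [map_add, coeffDerivation_X_pow_mul, add_sub_right_comm]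
    exact h.y.add (dvd_mul_right _ _)
  · have herror : derivative (Φ + X ^ (n + 1) * Polynomial.C s) - M * C =
        X ^ n * (c + Polynomial.C ((n + 1) * s)) := by
      simp only [map_add, derivative_mul, derivative_X_pow_succ, derivative_C, map_mul]
      linear_combination hc
    rw [herror, X_pow_succ_dvd_X_pow_mul_iff, coeff_add, coeff_C_zero, ← hs, add_neg_cancel]

lemma derivation_mul_coeff_zero_eq_of_X_pow_dvd_polyIntCoeff
    (hcomm : ∀ a, Dx (Dy a) = Dy (Dx a)) (hI : X ^ (n + 1) ∣ polyIntCoeff Dx Dy A B C)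
    {a b c : K[X]} (ha : coeffDerivation Dx Φ - M * A = X ^ (n + 1) * a)
    (hb : coeffDerivation Dy Φ - M * B = X ^ (n + 1) * b)
    (hc : derivative Φ - M * C = X ^ (n + 1) * c) :
    Dx (Φ.coeff 0) * b.coeff 0 = Dy (Φ.coeff 0) * a.coeff 0 := by
  have hMI : X ^ (n + 1) ∣ polyIntCoeff Dx Dy (M * A) (M * B) (M * C) := by
    rw [polyIntCoeff_mul]
    exact hI.mul_left _
  have hlead := X_pow_succ_dvd_polyIntCoeff_sub hcomm Φ a b c n
  rw [← ha, ← hb, ← hc, sub_sub_cancel, sub_sub_cancel, sub_sub_cancel, dvd_sub_right hMI,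
    X_pow_succ_dvd_X_pow_mul_iff] at hlead
  have hmul : (n + 1 : K) * (Dx (Φ.coeff 0) * b.coeff 0 - Dy (Φ.coeff 0) * a.coeff 0) = 0 := by
    simpa [mul_coeff_zero, coeff_coeffDerivation] using hlead
  exact sub_eq_zero.1 ((isUnit_natCast_add_one 𝕜 K n).mul_right_eq_zero.1 hmul)

lemma IsIntegratingFactor.exists_add_factor (hcomm : ∀ a, Dx (Dy a) = Dy (Dx a))
    (hdiv : HasDivisionProperty (A.coeff 0) (B.coeff 0))
    (hI : X ^ (n + 1) ∣ polyIntCoeff Dx Dy A B C) (hM : M.coeff 0 = 1)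
    (h : IsIntegratingFactor Dx Dy A B C (n + 1) (n + 1) M Φ) :
    ∃ l : K, IsIntegratingFactor Dx Dy A B C (n + 2) (n + 1)
      (M + X ^ (n + 1) * Polynomial.C l) Φ := by
  obtain ⟨a, ha⟩ := h.x
  obtain ⟨b, hb⟩ := h.y
  obtain ⟨c, hc⟩ := h.param
  have hab : A.coeff 0 * b.coeff 0 = B.coeff 0 * a.coeff 0 := by
    rw [coeff_zero_eq_of_X_pow_succ_dvd hM h.x, coeff_zero_eq_of_X_pow_succ_dvd hM h.y]
    exact derivation_mul_coeff_zero_eq_of_X_pow_dvd_polyIntCoeff hcomm hI ha hb hc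
  obtain ⟨l, hla, hlb⟩ := hdiv _ _ hab
  have herror {p A e : K[X]} (he : p - M * A = X ^ (n + 1) * e) :
      p - (M + X ^ (n + 1) * Polynomial.C l) * A = X ^ (n + 1) * (e - Polynomial.C l * A) := by
    linear_combination he
  refine ⟨l, ?_, ?_, ?_⟩
  · rw [herror ha, X_pow_succ_dvd_X_pow_mul_iff, coeff_sub, coeff_C_mul, hla, sub_self]
  · rw [herror hb, X_pow_succ_dvd_X_pow_mul_iff, coeff_sub, coeff_C_mul, hlb, sub_self]
  · rw [herror hc]
    exact dvd_mul_right _ _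

lemma exists_isIntegratingFactor (hcomm : ∀ a, Dx (Dy a) = Dy (Dx a)) {F : K}
    (hdiv : HasDivisionProperty (Dx F) (Dy F)) (hA : A.coeff 0 = Dx F) (hB : B.coeff 0 = Dy F)
    {k : ℕ} (hI : X ^ k ∣ polyIntCoeff Dx Dy A B C) :
    ∃ M Φ : K[X], M.coeff 0 = 1 ∧ Φ.coeff 0 = F ∧
      IsIntegratingFactor Dx Dy A B C (k + 1) k M Φ := by
  induction k with
  | zero =>
    refine ⟨1, Polynomial.C F, coeff_one_zero, coeff_C_zero, ?_, ?_, by simp⟩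
    · simp [X_dvd_iff, coeff_coeffDerivation, hA]
    · simp [X_dvd_iff, coeff_coeffDerivation, hB]
  | succ n ih =>
    obtain ⟨M, Φ, hM, hΦ, h⟩ := ih ((pow_dvd_pow X n.le_succ).trans hI)
    obtain ⟨s, hs⟩ := h.exists_add_potential
    obtain ⟨l, hl⟩ := hs.exists_add_factor hcomm (by rwa [hA, hB]) hI hM
    exact ⟨_, _, by simp [hM], by simp [hΦ], hl⟩

end IntegratingFactor

section FirstIntegral

variable {K : Type*} [CommRing K]

/-- The polynomial `∑ i ∈ {1, …, k}, a i * X ^ i` without constant term. -/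
noncomputable def epsSeries (k : ℕ) (a : ℕ → K) : K[X] :=
  ∑ i ∈ Finset.Icc 1 k, X ^ i * C (a i)

lemma coeff_epsSeries (k : ℕ) (a : ℕ → K) (n : ℕ) :
    (epsSeries k a).coeff n = if n ∈ Finset.Icc 1 k then a n else 0 := by
  simp [epsSeries, finsetSum_coeff, coeff_X_pow]

lemma coeff_zero_epsSeries (k : ℕ) (a : ℕ → K) : (epsSeries k a).coeff 0 = 0 := by
  simp [coeff_epsSeries]

lemma X_pow_succ_dvd_sub_epsSeries (k : ℕ) (p : K[X]) :
    X ^ (k + 1) ∣ p - (C (p.coeff 0) + epsSeries k p.coeff) := by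
  refine X_pow_dvd_iff.2 fun n hn => ?_
  rcases n.eq_zero_or_pos with rfl | hpos
  · simp [coeff_zero_epsSeries]
  · simp [coeff_epsSeries, coeff_C, hpos.ne', Nat.one_le_iff_ne_zero, Nat.lt_succ_iff.1 hn]

lemma exists_X_pow_dvd_one_sub_mul {M : K[X]} (hM : M.coeff 0 = 1) (m : ℕ) :
    ∃ N : K[X], X ^ m ∣ 1 - N * M := by
  obtain ⟨q, hq⟩ : X ∣ 1 - M := X_dvd_iff.2 (by simp [hM])
  obtain ⟨p, N, hpN⟩ : IsCoprime (X ^ m) M := IsCoprime.pow_left ⟨q, 1, by linear_combination -hq⟩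
  exact ⟨N, p, by linear_combination -hpN⟩

lemma dvd_sub_mul_of_dvd_sub {S : Type*} [CommRing S] {d N N₀ M A p p₀ : S}
    (hNM : d ∣ 1 - N * M) (hp : d ∣ p - M * A) (hN₀ : d ∣ N - N₀) (hp₀ : d ∣ p - p₀) :
    d ∣ A - N₀ * p₀ := by
  have hsum : A - N₀ * p₀ =
      (1 - N * M) * A - N * (p - M * A) + (N - N₀) * p + N₀ * (p - p₀) := by ring
  rw [hsum]
  exact (((hNM.mul_right A).sub (hp.mul_left N)).add (hN₀.mul_right p)).add (hp₀.mul_left N₀)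

variable {R : Type*} [CommRing R] [Algebra R K]

/-- `(g i, r i)`, `1 ≤ i ≤ k`, is a Françoise sequence of order `k` for `dF + ε (P dx + Q dy)`,
where `Dx` and `Dy` are the partial derivatives. -/
structure IsFrancoiseSequence (Dx Dy : Derivation R K K) (F P Q : K) (k : ℕ)
    (g r : ℕ → K) : Prop where
  zero : g 0 = 1
  x : ∀ i < k, g i * P = g (i + 1) * Dx F + Dx (r (i + 1))
  y : ∀ i < k, g i * Q = g (i + 1) * Dy F + Dy (r (i + 1))

/-- The coefficient of `X ^ (i + 1)` in `dΦ ≡ H (dF + X ω)`; the alternating signs turn it into a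
Françoise relation. -/
lemma francoise_relation_of_X_pow_dvd {D : Derivation R K K} {H Φ : K[X]} {F P : K} {k i : ℕ}
    (h : X ^ (k + 1) ∣ coeffDerivation D Φ - H * (C (D F) + X * C P)) (hi : i < k) :
    (-1) ^ i * H.coeff i * P = (-1) ^ (i + 1) * H.coeff (i + 1) * D F +
      D ((-1) ^ (i + 2) * Φ.coeff (i + 1)) := by
  have hcoeff := X_pow_dvd_iff.1 h (i + 1) (Nat.succ_lt_succ hi)
  rw [mul_add, ← mul_assoc, coeff_sub, coeff_coeffDerivation, coeff_add, coeff_mul_C, coeff_mul_C,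
    coeff_mul_X] at hcoeff
  have hsign : D ((-1) ^ (i + 2) * Φ.coeff (i + 1)) = (-1) ^ (i + 2) * D (Φ.coeff (i + 1)) := by
    rcases neg_one_pow_eq_or K (i + 2) with h | h <;> simp [h]
  rw [hsign]
  linear_combination -(-1) ^ i * hcoeff

/-- The first integral `F_ε = F + ∑ i ∈ {1, …, k}, (-1) ^ (i + 1) ε ^ i r_i` as a polynomial. -/
noncomputable def epsFirstIntegral (k : ℕ) (F : K) (r : ℕ → K) : K[X] :=
  C F + epsSeries k fun i => (-1) ^ (i + 1) * r i

lemma X_pow_succ_dvd_sub_epsFirstIntegral (k : ℕ) (p : K[X]) :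
    X ^ (k + 1) ∣ p - epsFirstIntegral k (p.coeff 0) fun i => (-1) ^ (i + 1) * p.coeff i := by
  simpa [epsFirstIntegral, ← mul_assoc, ← mul_pow] using X_pow_succ_dvd_sub_epsSeries k p

/-- The 1-form `(A, B, C)` over `K[X]` is `N dF_ε` for the unit `N = 1 + ∑ i ∈ {1, …, k}, ε ^ i n_i`
and `F_ε = epsFirstIntegral k F r`, modulo `ε ^ (k + 1)` in the space components and modulo `ε ^ k`
in the parameter component. -/
structure HasFirstIntegral (Dx Dy : Derivation R K K) (A B C : K[X]) (k : ℕ) (F : K)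
    (r n : ℕ → K) : Prop where
  x : X ^ (k + 1) ∣ A - (1 + epsSeries k n) * coeffDerivation Dx (epsFirstIntegral k F r)
  y : X ^ (k + 1) ∣ B - (1 + epsSeries k n) * coeffDerivation Dy (epsFirstIntegral k F r)
  param : X ^ k ∣ C - (1 + epsSeries k n) * derivative (epsFirstIntegral k F r)

lemma IsIntegratingFactor.exists_hasFirstIntegral {Dx Dy : Derivation R K K}
    {A B C M Φ : K[X]} {k : ℕ} (h : IsIntegratingFactor Dx Dy A B C (k + 1) k M Φ)
    (hM : M.coeff 0 = 1) :
    ∃ n : ℕ → K, HasFirstIntegral Dx Dy A B C k (Φ.coeff 0)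
      (fun i => (-1) ^ (i + 1) * Φ.coeff i) n := by
  obtain ⟨N, hNM⟩ := exists_X_pow_dvd_one_sub_mul hM (k + 1)
  have hN0 : N.coeff 0 = 1 := by
    have h0 := X_pow_dvd_iff.1 hNM 0 k.succ_pos
    rw [coeff_sub, coeff_one_zero, mul_coeff_zero, hM, mul_one] at h0
    exact (sub_eq_zero.1 h0).symm
  have hN : X ^ (k + 1) ∣ N - (1 + epsSeries k N.coeff) := by
    simpa [hN0] using X_pow_succ_dvd_sub_epsSeries k N
  have hΦ := X_pow_succ_dvd_sub_epsFirstIntegral k Φ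
  have hspace (D : Derivation R K K) := X_pow_dvd_coeffDerivation D hΦ
  have hparam := pow_sub_one_dvd_derivative_of_pow_dvd hΦ
  simp only [map_sub, Nat.add_sub_cancel] at hspace hparam
  have hk : (X : K[X]) ^ k ∣ X ^ (k + 1) := pow_dvd_pow X k.le_succ
  exact ⟨N.coeff, dvd_sub_mul_of_dvd_sub hNM h.x hN (hspace Dx),
    dvd_sub_mul_of_dvd_sub hNM h.y hN (hspace Dy),
    dvd_sub_mul_of_dvd_sub (hk.trans hNM) h.param (hk.trans hN) hparam⟩

theorem exists_isFrancoiseSequence_hasFirstIntegral {𝕜 : Type*} [Field 𝕜] [CharZero 𝕜]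
    [Algebra 𝕜 K] {Dx Dy : Derivation 𝕜 K K} (hcomm : ∀ a, Dx (Dy a) = Dy (Dx a)) {F P Q : K}
    (hdiv : HasDivisionProperty (Dx F) (Dy F)) {G S : K[X]} (hG : G.coeff 0 = 1) {k : ℕ}
    (hI : X ^ k ∣ polyIntCoeff Dx Dy (G * (C (Dx F) + X * C P)) (G * (C (Dy F) + X * C Q)) S) :
    ∃ g r n : ℕ → K, IsFrancoiseSequence Dx Dy F P Q k g r ∧
      HasFirstIntegral Dx Dy (G * (C (Dx F) + X * C P)) (G * (C (Dy F) + X * C Q)) S k F r n := by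
  obtain ⟨M, Φ, hM, rfl, h⟩ :=
    exists_isIntegratingFactor hcomm hdiv (by simp [hG]) (by simp [hG]) hI
  obtain ⟨n, hn⟩ := h.exists_hasFirstIntegral hM
  refine ⟨fun i => (-1) ^ i * (M * G).coeff i, fun i => (-1) ^ (i + 1) * Φ.coeff i, n,
    ⟨by simp [hM, hG], fun i hi => ?_, fun i hi => ?_⟩, hn⟩
  · exact francoise_relation_of_X_pow_dvd (by simpa only [mul_assoc] using h.x) hi
  · exact francoise_relation_of_X_pow_dvd (by simpa only [mul_assoc] using h.y) hi

end FirstIntegral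

section SeveralComplexVariables

open Filter Metric Set Topology

lemma exists_forall_mem_ball_mapsTo_closedBall {X Y : Type*} [PseudoMetricSpace X]
    [PseudoMetricSpace Y] {U : Set X} (hU : IsOpen U) {f : X → Y} (hf : ContinuousOn f U) {c : X}
    (hc : c ∈ U) {ε : ℝ} (hε : 0 < ε) :
    ∃ R > 0, ∀ p ∈ ball c R, ball p R ⊆ U ∧ MapsTo f (ball p R) (closedBall (f p) ε) := by
  have hcont : ContinuousAt f c := hf.continuousAt (hU.mem_nhds hc)
  obtain ⟨ρ, hρ, hball⟩ : ∃ ρ > 0, ball c ρ ⊆ U ∩ f ⁻¹' ball (f c) (ε / 2) :=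
    Metric.mem_nhds_iff.1 (inter_mem (hU.mem_nhds hc)
      (hcont.preimage_mem_nhds (ball_mem_nhds _ (half_pos hε))))
  refine ⟨ρ / 2, half_pos hρ, fun p hp => ?_⟩
  have hsub : ball p (ρ / 2) ⊆ ball c ρ := ball_subset_ball' (by linarith [mem_ball.1 hp])
  refine ⟨fun z hz => (hball (hsub hz)).1, fun z hz => ?_⟩
  have hzc : dist (f z) (f c) < ε / 2 := (hball (hsub hz)).2
  have hpc : dist (f p) (f c) < ε / 2 := (hball (hsub (mem_ball_self (half_pos hρ)))).2
  rw [mem_closedBall]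
  linarith [dist_triangle_right (f z) (f p) (f c)]

variable {E F : Type*} [NormedAddCommGroup E] [NormedSpace ℂ E]
  [NormedAddCommGroup F] [NormedSpace ℂ F]

lemma norm_fderiv_le_two_mul_div {f : E → F} {c : E} {R M : ℝ}
    (hf : DifferentiableOn ℂ f (ball c R)) (hM : ∀ z ∈ ball c R, ‖f z‖ ≤ M) (hR : 0 < R) :
    ‖fderiv ℂ f c‖ ≤ 2 * M / R := by
  refine Complex.norm_fderiv_le_div_of_mapsTo_ball hf (fun z hz => ?_) hR
  rw [mem_closedBall, two_mul]
  exact (dist_le_norm_add_norm _ _).trans (add_le_add (hM z hz) (hM c (mem_ball_self hR)))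

lemma norm_sub_sub_fderiv_le {f : E → F} {c z : E} {R M : ℝ}
    (hf : DifferentiableOn ℂ f (ball c R)) (hM : MapsTo f (ball c R) (closedBall (f c) M))
    (hz : z ∈ ball c R) :
    ‖f z - f c - fderiv ℂ f c (z - c)‖ ≤ 2 * M * (dist z c / R) ^ 2 := by
  have hR : 0 < R := dist_nonneg.trans_lt hz
  have hfc : DifferentiableAt ℂ f c := hf.differentiableAt (ball_mem_nhds c hR)
  have hfderiv : ‖fderiv ℂ f c‖ ≤ M / R := Complex.norm_fderiv_le_div_of_mapsTo_ball hf hM hR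
  let g : E → F := fun y => f y - fderiv ℂ f c (y - c)
  have hg : DifferentiableOn ℂ g (ball c R) := by fun_prop
  have hgM : MapsTo g (ball c R) (closedBall (g c) (2 * M)) := by
    intro y hy
    have hfy : ‖f y - f c‖ ≤ M := mem_closedBall_iff_norm.1 (hM hy)
    have hlin : ‖fderiv ℂ f c (y - c)‖ ≤ M :=
      calc ‖fderiv ℂ f c (y - c)‖ ≤ M / R * R :=
            (fderiv ℂ f c).le_of_opNorm_le_of_le hfderiv (mem_ball_iff_norm.1 hy).le
        _ = M := div_mul_cancel₀ M hR.ne'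
    rw [mem_closedBall_iff_norm]
    calc ‖g y - g c‖ = ‖(f y - f c) - fderiv ℂ f c (y - c)‖ := by simp [g, sub_right_comm]
      _ ≤ 2 * M := by linarith [norm_sub_le (f y - f c) (fderiv ℂ f c (y - c))]
  have hgo : (g · - g c) =o[𝓝 c] (‖· - c‖ ^ 1) := by
    simpa [g, sub_right_comm] using hfc.hasFDerivAt.isLittleO.norm_right
  calc ‖f z - f c - fderiv ℂ f c (z - c)‖ = dist (g z) (g c) := by
        simp [g, dist_eq_norm, sub_right_comm]
    _ ≤ 2 * M * (dist z c / R) ^ 2 :=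
        Complex.dist_le_mul_div_pow_of_mapsTo_ball_of_isLittleO hg hgM hgo hz

lemma uniformCauchySeqOn_fderiv {ι : Type*} {l : Filter ι} {f : ι → E → F} {c : E} {R : ℝ}
    (hR : 0 < R) (hf : ∀ᶠ i in l, DifferentiableOn ℂ (f i) (ball c R))
    (hfC : UniformCauchySeqOn f l (ball c R)) :
    UniformCauchySeqOn (fun i => fderiv ℂ (f i)) l (ball c (R / 2)) := by
  intro u hu
  obtain ⟨ε, hε, hεu⟩ := mem_uniformity_dist.1 hu
  filter_upwards [hfC _ (dist_mem_uniformity (show 0 < ε * R / 8 by positivity)),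
    hf.prod_mk hf] with ⟨i, j⟩ hij ⟨hi, hj⟩ z hz
  have hsub : ball z (R / 2) ⊆ ball c R := ball_subset_ball' (by linarith [mem_ball.1 hz])
  have hcz : ball c R ∈ 𝓝 z := isOpen_ball.mem_nhds (hsub (mem_ball_self (by positivity)))
  refine hεu ?_
  calc dist (fderiv ℂ (f i) z) (fderiv ℂ (f j) z)
      = ‖fderiv ℂ (f i - f j) z‖ := by
        rw [fderiv_sub (hi.differentiableAt hcz) (hj.differentiableAt hcz), dist_eq_norm]
    _ ≤ 2 * (ε * R / 8) / (R / 2) :=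
        norm_fderiv_le_two_mul_div ((hi.sub hj).mono hsub)
          (fun w hw => by simpa [dist_eq_norm] using (hij w (hsub hw)).le) (by positivity)
    _ < ε := by field_simp; linarith

/-- The difference quotient of `f` with increment `t` in the direction `v`, as a function of the
base point; its limit for `t → 0` is the directional derivative. It is `0` for `t = 0`. -/
noncomputable def differenceQuotient (f : E → F) (v : E) (t : ℂ) (p : E) : F :=
  t⁻¹ • (f (p + t • v) - f p)

lemma norm_differenceQuotient_sub_fderiv_le {f : E → F} {v p : E} {t : ℂ} {R M : ℝ}
    (hf : DifferentiableOn ℂ f (ball p R)) (hM : MapsTo f (ball p R) (closedBall (f p) M))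
    (ht0 : t ≠ 0) (ht : ‖t • v‖ < R) :
    ‖differenceQuotient f v t p - fderiv ℂ f p v‖ ≤ ‖t‖ * (2 * M * (‖v‖ / R) ^ 2) := by
  have hmem : p + t • v ∈ ball p R := by simpa [mem_ball_iff_norm] using ht
  have ht0' : ‖t‖ ≠ 0 := norm_ne_zero_iff.2 ht0
  calc ‖differenceQuotient f v t p - fderiv ℂ f p v‖
      = ‖t‖⁻¹ * ‖f (p + t • v) - f p - fderiv ℂ f p (p + t • v - p)‖ := by
        rw [← norm_inv, ← norm_smul, smul_sub, differenceQuotient, add_sub_cancel_left, map_smul,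
          inv_smul_smul₀ ht0]
    _ ≤ ‖t‖⁻¹ * (2 * M * (dist (p + t • v) p / R) ^ 2) := by
        gcongr
        exact norm_sub_sub_fderiv_le hf hM hmem
    _ = ‖t‖ * (2 * M * (‖v‖ / R) ^ 2) := by
        rw [dist_self_add_left, norm_smul]
        field_simp

lemma fderiv_differenceQuotient_apply {f : E → F} {v p : E} {t : ℂ}
    (hp : DifferentiableAt ℂ f p) (hpt : DifferentiableAt ℂ f (p + t • v)) (w : E) :
    fderiv ℂ (differenceQuotient f v t) p w =
      differenceQuotient (fun q => fderiv ℂ f q w) v t p := by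
  have hshift : HasFDerivAt (fun q => f (q + t • v)) (fderiv ℂ f (p + t • v)) p :=
    (hasFDerivAt_comp_add_right _).2 hpt.hasFDerivAt
  have hquot : HasFDerivAt (differenceQuotient f v t)
      (t⁻¹ • (fderiv ℂ f (p + t • v) - fderiv ℂ f p)) p :=
    (hshift.sub hp.hasFDerivAt).const_smul t⁻¹
  rw [hquot.fderiv]
  rfl

lemma tendsto_differenceQuotient {f : E → F} {p : E} (hf : DifferentiableAt ℂ f p) (v : E) :
    Tendsto (fun t => differenceQuotient f v t p) (𝓝[≠] 0) (𝓝 (fderiv ℂ f p v)) :=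
  (hf.hasFDerivAt.hasLineDerivAt v).tendsto_slope_zero

variable {U : Set E} {f : E → F}

lemma exists_ball_tendstoUniformlyOn_differenceQuotient (hU : IsOpen U)
    (hf : DifferentiableOn ℂ f U) (v : E) {c : E} (hc : c ∈ U) :
    ∃ R > 0, (∀ᶠ t in 𝓝[≠] 0, DifferentiableOn ℂ (differenceQuotient f v t) (ball c R)) ∧
      TendstoUniformlyOn (differenceQuotient f v) (fun p => fderiv ℂ f p v) (𝓝[≠] 0)
        (ball c R) := by
  obtain ⟨R, hR, hloc⟩ :=
    exists_forall_mem_ball_mapsTo_closedBall hU hf.continuousOn hc one_pos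
  have hsmall : ∀ᶠ t : ℂ in 𝓝[≠] 0, ‖t • v‖ < R :=
    (((by fun_prop : Continuous fun t : ℂ => ‖t • v‖).tendsto' 0 0 (by simp)).mono_left
      nhdsWithin_le_nhds).eventually_lt_const hR
  refine ⟨R, hR, ?_, Metric.tendstoUniformlyOn_iff.2 fun ε hε => ?_⟩
  · filter_upwards [hsmall] with t ht
    have hshift : DifferentiableOn ℂ (fun p => f (p + t • v)) (ball c R) :=
      hf.comp (by fun_prop) fun p hp => (hloc p hp).1 (by simpa [mem_ball_iff_norm] using ht)
    exact (hshift.sub (hf.mono (hloc c (mem_ball_self hR)).1)).const_smul _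
  · have hlim : ∀ᶠ t : ℂ in 𝓝[≠] 0, ‖t‖ * (2 * 1 * (‖v‖ / R) ^ 2) < ε :=
      (((by fun_prop : Continuous fun t : ℂ => ‖t‖ * (2 * 1 * (‖v‖ / R) ^ 2)).tendsto' 0 0
        (by simp)).mono_left nhdsWithin_le_nhds).eventually_lt_const hε
    filter_upwards [hsmall, hlim, self_mem_nhdsWithin] with t ht htε ht0 p hp
    rw [dist_comm, dist_eq_norm]
    exact (norm_differenceQuotient_sub_fderiv_le (hf.mono (hloc p hp).1) (hloc p hp).2 ht0
      ht).trans_lt htε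

variable [CompleteSpace F]

lemma exists_hasFDerivAt_of_tendstoUniformlyOn_ball {ι : Type*} {l : Filter ι} [l.NeBot]
    {f : ι → E → F} {g : E → F} {c : E} {R : ℝ} (hR : 0 < R)
    (hf : ∀ᶠ i in l, DifferentiableOn ℂ (f i) (ball c R))
    (hfg : TendstoUniformlyOn f g l (ball c R)) :
    ∃ g' : E →L[ℂ] F, HasFDerivAt g g' c ∧ Tendsto (fun i => fderiv ℂ (f i) c) l (𝓝 g') := by
  have hcauchy := uniformCauchySeqOn_fderiv hR hf hfg.uniformCauchySeqOn
  choose! g' hg' using fun z (hz : z ∈ ball c (R / 2)) =>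
    CompleteSpace.complete (hcauchy.cauchy_map hz)
  have hfg' : TendstoUniformlyOn (fun i => fderiv ℂ (f i)) g' l (ball c (R / 2)) :=
    hcauchy.tendstoUniformlyOn_of_tendsto hg'
  have hc : ball c (R / 2) ∈ 𝓝 c := ball_mem_nhds c (by positivity)
  refine ⟨g' c, hasFDerivAt_of_tendstoUniformlyOnFilter (l := l) (f := f)
    (hfg'.tendstoUniformlyOnFilter.mono_right (le_principal_iff.2 hc)) ?_ ?_,
    hg' c (mem_of_mem_nhds hc)⟩
  · filter_upwards [hf.prod_mk (eventually_mem_nhds_iff.2 (ball_mem_nhds c hR))]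
      with ⟨i, z⟩ ⟨hi, hz⟩
    exact (hi.differentiableAt hz).hasFDerivAt
  · filter_upwards [ball_mem_nhds c hR] with z hz using hfg.tendsto_at hz

lemma differentiableOn_fderiv_apply (hU : IsOpen U) (hf : DifferentiableOn ℂ f U) (v : E) :
    DifferentiableOn ℂ (fun p => fderiv ℂ f p v) U := by
  intro c hc
  obtain ⟨R, hR, hdiff, hlim⟩ :=
    exists_ball_tendstoUniformlyOn_differenceQuotient hU hf v hc
  obtain ⟨_, hderiv, -⟩ := exists_hasFDerivAt_of_tendstoUniformlyOn_ball hR hdiff hlim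
  exact hderiv.differentiableAt.differentiableWithinAt

lemma fderiv_fderiv_apply_comm (hU : IsOpen U) (hf : DifferentiableOn ℂ f U) (v w : E) {p : E}
    (hp : p ∈ U) :
    fderiv ℂ (fun q => fderiv ℂ f q w) p v = fderiv ℂ (fun q => fderiv ℂ f q v) p w := by
  obtain ⟨R, hR, hdiff, hlim⟩ :=
    exists_ball_tendstoUniformlyOn_differenceQuotient hU hf w hp
  obtain ⟨f', hderiv, hf'⟩ := exists_hasFDerivAt_of_tendstoUniformlyOn_ball hR hdiff hlim
  have hquot := tendsto_differenceQuotient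
    ((differentiableOn_fderiv_apply hU hf v).differentiableAt (hU.mem_nhds hp)) w
  have hmem : ∀ᶠ t : ℂ in 𝓝[≠] 0, p + t • w ∈ U :=
    nhdsWithin_le_nhds ((by fun_prop : ContinuousAt (fun t : ℂ => p + t • w) 0).eventually_mem
      (hU.mem_nhds (by simpa using hp)))
  have hf'v : Tendsto (fun t => fderiv ℂ (differenceQuotient f w t) p v) (𝓝[≠] 0) (𝓝 (f' v)) :=
    ((ContinuousLinearMap.apply ℂ F v).continuous.tendsto f').comp hf'
  rw [hderiv.fderiv]
  refine tendsto_nhds_unique hf'v (hquot.congr' ?_)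
  filter_upwards [hmem] with t ht
  exact (fderiv_differenceQuotient_apply (hf.differentiableAt (hU.mem_nhds hp))
    (hf.differentiableAt (hU.mem_nhds ht)) v).symm

end SeveralComplexVariables

section HolomorphicFunctions

variable {E : Type*} [NormedAddCommGroup E] [NormedSpace ℂ E] {U : Opens E}

/-- The functions on the subtype `U` that are restrictions of functions holomorphic on `U`. -/
def holomorphicSubalgebra (U : Opens E) : Subalgebra ℂ (U → ℂ) where
  carrier := {f | ∃ g : E → ℂ, DifferentiableOn ℂ g U ∧ ∀ p : U, g p = f p}
  mul_mem' := by
    rintro _ _ ⟨g, hg, hgf⟩ ⟨g', hg', hgf'⟩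
    exact ⟨g * g', hg.mul hg', fun p => by simp [hgf, hgf']⟩
  add_mem' := by
    rintro _ _ ⟨g, hg, hgf⟩ ⟨g', hg', hgf'⟩
    exact ⟨g + g', hg.add hg', fun p => by simp [hgf, hgf']⟩
  algebraMap_mem' c := ⟨fun _ => c, differentiableOn_const c, fun _ => rfl⟩

/-- The algebra of holomorphic functions on `U`, as functions on the subtype `U`, so that equality
in `Hol U` is equality on `U`. It is a type of its own, not a coerced subalgebra, because unifying
the various ring and module structures of the subalgebra is too slow. -/
def Hol (U : Opens E) : Type _ := holomorphicSubalgebra U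

namespace Hol

noncomputable instance : CommRing (Hol U) := inferInstanceAs (CommRing (holomorphicSubalgebra U))

noncomputable instance : Algebra ℂ (Hol U) := inferInstanceAs (Algebra ℂ (holomorphicSubalgebra U))

instance : FunLike (Hol U) U ℂ := ⟨Subtype.val, Subtype.val_injective⟩

lemma add_apply (f g : Hol U) (p : U) : (f + g) p = f p + g p := rfl

lemma mul_apply (f g : Hol U) (p : U) : (f * g) p = f p * g p := rfl

lemma smul_apply (c : ℂ) (f : Hol U) (p : U) : (c • f) p = c • f p := rfl

/-- Evaluation at a point of `U`. -/
noncomputable def evalAt (p : U) : Hol U →+* ℂ :=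
  (Pi.evalRingHom (fun _ : U => ℂ) p).comp (holomorphicSubalgebra U).val.toRingHom

lemma evalAt_apply (p : U) (f : Hol U) : evalAt p f = f p := rfl

lemma eval_algebraMap_apply (S : (Hol U)[X]) (p : U) (e : ℂ) :
    S.eval (algebraMap ℂ (Hol U) e) p = (S.map (evalAt p)).eval e := by
  rw [eval_map]
  exact hom_eval₂ S (RingHom.id _) (evalAt p) _

/-- The restriction to `U` of a function that is holomorphic on `U`. -/
def restrict (g : E → ℂ) (hg : DifferentiableOn ℂ g U) : Hol U :=
  ⟨fun p => g p, g, hg, fun _ => rfl⟩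

/-- The extension of `f` to the whole space by the junk value `1`, for which the extension of the
constant `1` is again the constant `1`. -/
noncomputable def extend (f : Hol U) : E → ℂ := Function.extend Subtype.val f 1

lemma extend_apply (f : Hol U) (p : U) : f.extend p = f p :=
  Subtype.val_injective.extend_apply _ _ _

lemma extend_one (p : E) : (1 : Hol U).extend p = 1 := by
  by_cases hp : ∃ q : U, (q : E) = p
  · obtain ⟨q, rfl⟩ := hp
    exact extend_apply 1 q
  · exact Function.extend_apply' _ _ _ hp

lemma differentiableOn_extend (f : Hol U) : DifferentiableOn ℂ f.extend U := by
  obtain ⟨g, hg, hgf⟩ := f.2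
  refine hg.congr fun p hp => ?_
  lift p to U using hp
  exact (f.extend_apply p).trans (hgf p).symm

lemma differentiableAt_extend (f : Hol U) (p : U) : DifferentiableAt ℂ f.extend p :=
  f.differentiableOn_extend.differentiableAt (U.isOpen.mem_nhds p.2)

lemma fderiv_extend_eq {f : Hol U} {g : E → ℂ} (h : ∀ q : U, g q = f q) (p : U) :
    fderiv ℂ f.extend p = fderiv ℂ g p := by
  refine Filter.EventuallyEq.fderiv_eq ?_
  filter_upwards [U.isOpen.mem_nhds p.2] with q hq
  rw [h ⟨q, hq⟩, ← extend_apply]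

lemma fderiv_extend_add (f g : Hol U) (p : U) :
    fderiv ℂ (f + g).extend p = fderiv ℂ f.extend p + fderiv ℂ g.extend p := by
  rw [fderiv_extend_eq (g := f.extend + g.extend) fun q => by simp [add_apply, extend_apply],
    fderiv_add (f.differentiableAt_extend p) (g.differentiableAt_extend p)]

lemma fderiv_extend_mul (f g : Hol U) (p : U) :
    fderiv ℂ (f * g).extend p = f p • fderiv ℂ g.extend p + g p • fderiv ℂ f.extend p := by
  rw [fderiv_extend_eq (g := f.extend * g.extend) fun q => by simp [mul_apply, extend_apply],
    fderiv_mul (f.differentiableAt_extend p) (g.differentiableAt_extend p), extend_apply,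
    extend_apply]

lemma fderiv_extend_smul (c : ℂ) (f : Hol U) (p : U) :
    fderiv ℂ (c • f).extend p = c • fderiv ℂ f.extend p := by
  rw [fderiv_extend_eq (g := c • f.extend) fun q => by simp [smul_apply, extend_apply],
    fderiv_const_smul (f.differentiableAt_extend p)]

/-- The derivative in the direction `v`, as a derivation of the algebra `Hol U`. -/
noncomputable def dirDeriv (v : E) : Derivation ℂ (Hol U) (Hol U) :=
  Derivation.mk'
    { toFun f := restrict (fun p => fderiv ℂ f.extend p v)
        (differentiableOn_fderiv_apply U.isOpen f.differentiableOn_extend v)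
      map_add' f g := DFunLike.ext _ _ fun p => congr($(fderiv_extend_add f g p) v)
      map_smul' c f := DFunLike.ext _ _ fun p => congr($(fderiv_extend_smul c f p) v) }
    fun f g => DFunLike.ext _ _ fun p => congr($(fderiv_extend_mul f g p) v)

lemma dirDeriv_apply {f : Hol U} {g : E → ℂ} (h : ∀ q : U, g q = f q) (v : E) (p : U) :
    dirDeriv v f p = fderiv ℂ g p v :=
  congr($(fderiv_extend_eq h p) v)

lemma dirDeriv_comm (v w : E) (f : Hol U) :
    dirDeriv v (dirDeriv w f) = dirDeriv w (dirDeriv v f) :=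
  DFunLike.ext _ _ fun p => by
    rw [dirDeriv_apply (g := fun q => fderiv ℂ f.extend q w) fun _ => rfl,
      dirDeriv_apply (g := fun q => fderiv ℂ f.extend q v) fun _ => rfl]
    exact fderiv_fderiv_apply_comm U.isOpen f.differentiableOn_extend v w p.2

lemma differentiableAt_of_mul_eq {u a : Hol U} {l : E → ℂ} (h : ∀ q : U, a q = l q * u q)
    {p : U} (hp : u p ≠ 0) : DifferentiableAt ℂ l p := by
  have hu : u.extend p ≠ 0 := by rwa [extend_apply]
  have ha' := a.differentiableAt_extend p
  have hu' := u.differentiableAt_extend p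
  have hquot : DifferentiableAt ℂ (fun q => a.extend q / u.extend q) p := by
    fun_prop (disch := exact hu)
  refine hquot.congr_of_eventuallyEq ?_
  filter_upwards [U.isOpen.mem_nhds p.2, hu'.continuousAt.eventually_ne hu] with q hq huq
  lift q to U using hq
  rw [eq_div_iff huq, extend_apply, extend_apply, h]

/-- Pointwise the ratio exists because the pair does not vanish; it is holomorphic because it is
the quotient by `u` near points with `u ≠ 0` and the quotient by `v` near points with `v ≠ 0`. -/
lemma hasDivisionProperty {u v : Hol U} (huv : ∀ p, (u p, v p) ≠ (0, 0)) :
    HasDivisionProperty u v := by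
  intro a b hab
  choose l ha hb using fun p => hasDivisionProperty_of_ne_zero (huv p) (a p) (b p) congr($hab p)
  have hext : ∀ p : U, Function.extend Subtype.val l 1 p = l p :=
    Subtype.val_injective.extend_apply l 1
  have hl : DifferentiableOn ℂ (Function.extend Subtype.val l 1) U := by
    intro p hp
    lift p to U using hp
    refine DifferentiableAt.differentiableWithinAt ?_
    by_cases hu : u p = 0
    · have hv : v p ≠ 0 := fun hv => huv p (Prod.ext hu hv)
      exact differentiableAt_of_mul_eq (fun q => by rw [hext, hb]) hv
    · exact differentiableAt_of_mul_eq (fun q => by rw [hext, ha]) hu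
  refine ⟨restrict _ hl, DFunLike.ext _ _ fun p => ?_, DFunLike.ext _ _ fun p => ?_⟩
  · exact (ha p).trans congr($((hext p).symm) * u p)
  · exact (hb p).trans congr($((hext p).symm) * v p)

lemma exists_forall_eq {g : E → ℂ} (hg : DifferentiableOn ℂ g U) :
    ∃ f : Hol U, ∀ p : U, g p = f p :=
  ⟨restrict g hg, fun _ => rfl⟩

end Hol

end HolomorphicFunctions

section PolynomialFamilies

lemma iteratedDeriv_eval_zero {𝕜 : Type*} [NontriviallyNormedField 𝕜] (p : 𝕜[X]) (n : ℕ) :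
    iteratedDeriv n (fun e => p.eval e) 0 = n.factorial * p.coeff n := by
  have hderivative : ∀ p : 𝕜[X], deriv (fun e => p.eval e) = fun e => (derivative p).eval e :=
    fun p => funext fun e => p.deriv
  have hiterate : iteratedDeriv n (fun e => p.eval e) = fun e => (derivative^[n] p).eval e := by
    induction n generalizing p with
    | zero => rfl
    | succ n ih => rw [iteratedDeriv_succ', hderivative, ih, Function.iterate_succ_apply]
  rw [hiterate]
  beta_reduce
  rw [← coeff_zero_eq_eval_zero, coeff_iterate_derivative, zero_add,
    Nat.descFactorial_self, nsmul_eq_mul]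

variable {E : Type*} [NormedAddCommGroup E] [NormedSpace ℂ E] {U : Opens E}

/-- The polynomial `S` over `Hol U` represents the function `f` of a space variable and a parameter:
for `p ∈ U`, the function `f p` is given by `S` with its coefficients evaluated at `p`. -/
def Represents (S : (Hol U)[X]) (f : E → ℂ → ℂ) : Prop :=
  ∀ p : U, f p = fun e => (S.map (Hol.evalAt p)).eval e

namespace Represents

variable {f g : E → ℂ → ℂ} {S T : (Hol U)[X]}

lemma add (hf : Represents S f) (hg : Represents T g) :
    Represents (S + T) fun p e => f p e + g p e := fun p => by
  simp [hf p, hg p]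

lemma sub (hf : Represents S f) (hg : Represents T g) :
    Represents (S - T) fun p e => f p e - g p e := fun p => by
  simp [hf p, hg p]

lemma mul (hf : Represents S f) (hg : Represents T g) :
    Represents (S * T) fun p e => f p e * g p e := fun p => by
  simp [hf p, hg p]

lemma sum {ι : Type*} {s : Finset ι} {f : ι → E → ℂ → ℂ} {S : ι → (Hol U)[X]}
    (h : ∀ i ∈ s, Represents (S i) (f i)) :
    Represents (∑ i ∈ s, S i) fun p e => ∑ i ∈ s, f i p e := fun p => by
  ext e
  rw [Polynomial.map_sum, eval_finsetSum]
  exact Finset.sum_congr rfl fun i hi => congr_fun (h i hi p) e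

lemma const {f : E → ℂ} {a : Hol U} (h : ∀ p : U, f p = a p) :
    Represents (C a) fun p _ => f p := fun p => by
  simp [h p, Hol.evalAt_apply]

lemma one : Represents (1 : (Hol U)[X]) fun _ _ => 1 := fun p => by
  simp

lemma param_pow (n : ℕ) : Represents (X ^ n : (Hol U)[X]) fun _ e => e ^ n := fun p => by
  simp

lemma param : Represents (X : (Hol U)[X]) fun _ e => e := fun p => by
  simp

lemma fderiv_space (h : Represents S f) (v : E) :
    Represents (coeffDerivation (Hol.dirDeriv v) S)
      fun p e => fderiv ℂ (fun q => f q e) p v := fun p => by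
  ext e
  rw [← Hol.eval_algebraMap_apply, eval_algebraMap_coeffDerivation,
    Hol.dirDeriv_apply (g := fun q => f q e) fun q => ?_]
  rw [Hol.eval_algebraMap_apply, h q]

lemma deriv_param (h : Represents S f) :
    Represents (derivative S) fun p e => deriv (f p) e := fun p => by
  ext e
  beta_reduce
  rw [h p, Polynomial.deriv, derivative_map]

lemma iteratedDeriv_zero (h : Represents S f) (p : U) (n : ℕ) :
    iteratedDeriv n (f p) 0 = n.factorial * S.coeff n p := by
  rw [h p, iteratedDeriv_eval_zero, coeff_map]
  rfl

lemma iteratedDeriv_eq_zero (h : Represents S f) {m : ℕ} (hS : X ^ m ∣ S) (p : U) :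
    ∀ n < m, iteratedDeriv n (f p) 0 = 0 := fun n hn => by
  rw [h.iteratedDeriv_zero, X_pow_dvd_iff.1 hS n hn]
  exact mul_zero _

lemma X_pow_dvd (h : Represents S f) {m : ℕ}
    (hf : ∀ p ∈ U, ∀ n < m, iteratedDeriv n (f p) 0 = 0) : X ^ m ∣ S := by
  refine X_pow_dvd_iff.2 fun n hn => DFunLike.ext _ _ fun p => ?_
  have hn0 := hf p p.2 n hn
  rw [h.iteratedDeriv_zero] at hn0
  exact (mul_eq_zero.1 hn0).resolve_left (Nat.cast_ne_zero.2 n.factorial_ne_zero)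

end Represents

end PolynomialFamilies

section ComplexPlane

variable {U : Opens (ℂ × ℂ)}

lemma represents_intCoeff {A B C : ℂ × ℂ → ℂ → ℂ} {SA SB SC : (Hol U)[X]}
    (hA : Represents SA A) (hB : Represents SB B) (hC : Represents SC C) :
    Represents (polyIntCoeff (Hol.dirDeriv (1, 0)) (Hol.dirDeriv (0, 1)) SA SB SC)
      (intCoeff A B C) := by
  have hx := hA.mul ((hC.fderiv_space (0, 1)).sub hB.deriv_param)
  have hy := hB.mul (hA.deriv_param.sub (hC.fderiv_space (1, 0)))
  have hparam := hC.mul ((hB.fderiv_space (1, 0)).sub (hA.fderiv_space (0, 1)))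
  exact (hx.add hy).add hparam

variable {k : ℕ} {a : ℕ → ℂ × ℂ → ℂ} {b : ℕ → Hol U}

lemma represents_GserGV (h : ∀ i ∈ Finset.Icc 1 k, ∀ p : U, a i p = b i p) :
    Represents (1 + epsSeries k b) (GserGV k a) :=
  Represents.one.add (.sum fun i hi => (Represents.param_pow i).mul (.const (h i hi)))

lemma represents_Feps {F : ℂ × ℂ → ℂ} {f : Hol U} (hF : ∀ p : U, F p = f p)
    (h : ∀ i ∈ Finset.Icc 1 k, ∀ p : U, a i p = b i p) :
    Represents (epsFirstIntegral k f b) fun p e => Feps k F a e p := by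
  refine (Represents.const hF).add (.sum fun i hi => ?_)
  have hsign : ∀ p : U, (-1) ^ (i + 1) * a i p = ((-1) ^ (i + 1) * b i) p := fun p => by
    rw [h i hi, Hol.mul_apply]
    rfl
  simpa only [mul_assoc, mul_left_comm] using
    (Represents.param_pow i).mul (.const (f := fun p => (-1) ^ (i + 1) * a i p) hsign)

lemma exists_represents_GserGV
    (ha : ∀ i ∈ Finset.Icc 1 k, DifferentiableOn ℂ (a i) U) :
    ∃ S : (Hol U)[X], S.coeff 0 = 1 ∧ Represents S (GserGV k a) := by
  choose! b hb using fun i hi => Hol.exists_forall_eq (ha i hi)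
  exact ⟨_, by simp [coeff_zero_epsSeries], represents_GserGV hb⟩

lemma exists_represents_CserGV
    (ha : ∀ i ∈ Finset.Icc 1 k, DifferentiableOn ℂ (a i) U) :
    ∃ S : (Hol U)[X], Represents S (CserGV k a) := by
  choose! b hb using fun i hi => Hol.exists_forall_eq (ha i hi)
  exact ⟨_, .sum fun i hi => (Represents.param_pow (i - 1)).mul (.const (hb i hi))⟩

lemma HasFirstIntegral.iteratedDeriv_eq_zero {A B C : ℂ × ℂ → ℂ → ℂ} {SA SB SC : (Hol U)[X]}
    (hA : Represents SA A) (hB : Represents SB B) (hC : Represents SC C) {F : ℂ × ℂ → ℂ}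
    {f : Hol U} (hF : ∀ p : U, F p = f p) {r n : ℕ → Hol U}
    (h : HasFirstIntegral (Hol.dirDeriv (1, 0)) (Hol.dirDeriv (0, 1)) SA SB SC k f r n) (p : U) :
    let N := GserGV k (fun i => (n i).extend) p
    let Fε := Feps k F fun i => (r i).extend
    (∀ m < k + 1, iteratedDeriv m (fun e => A p e - N e * pdx (Fε e) p) 0 = 0) ∧
      (∀ m < k + 1, iteratedDeriv m (fun e => B p e - N e * pdy (Fε e) p) 0 = 0) ∧
      ∀ m < k, iteratedDeriv m (fun e => C p e - N e * deriv (fun e' => Fε e' p) e) 0 = 0 := by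
  have hN := represents_GserGV (k := k) fun i _ => (n i).extend_apply
  have hFε := represents_Feps (k := k) hF fun i _ => (r i).extend_apply
  exact ⟨(hA.sub (hN.mul (hFε.fderiv_space (1, 0)))).iteratedDeriv_eq_zero h.x p,
    (hB.sub (hN.mul (hFε.fderiv_space (0, 1)))).iteratedDeriv_eq_zero h.y p,
    (hC.sub (hN.mul hFε.deriv_param)).iteratedDeriv_eq_zero h.param p⟩

end ComplexPlane

/-- Theorem 7(iii): if Ω = (G·(∂F/∂x + εP), G·(∂F/∂y + εQ), Σ ε^{i−1}R_i), with
G = 1 + Σ_{i=1}^k ε^i G_i, solves the Godbillon-Vey integrability equation up to order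
k (the coefficients of ε^n of ⟨Ω ∧ dΩ⟩ vanish for n ≤ k−1), then there are a Françoise
sequence (g_i, r_i) of order k for dF + εω and holomorphic n_i such that with
N = 1 + Σ ε^i n_i and F_ε = F + Σ (−1)^{i+1} ε^i r_i one has A ≡ N·∂F_ε/∂x and
B ≡ N·∂F_ε/∂y mod ε^{k+1}, and C ≡ N·∂F_ε/∂ε mod ε^k. -/
theorem godbillon_vey_gives_francoise_and_first_integral
    (U : Set (ℂ × ℂ)) (hU : IsOpen U) (k : ℕ) (hk : 1 ≤ k)
    (F P Q : ℂ × ℂ → ℂ) (G R : ℕ → ℂ × ℂ → ℂ)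
    (hF : DifferentiableOn ℂ F U)
    (hdF : ∀ p ∈ U, (pdx F p, pdy F p) ≠ (0, 0))
    (hP : DifferentiableOn ℂ P U) (hQ : DifferentiableOn ℂ Q U)
    (hGd : ∀ i, 1 ≤ i → i ≤ k → DifferentiableOn ℂ (G i) U)
    (hRd : ∀ i, 1 ≤ i → i ≤ k → DifferentiableOn ℂ (R i) U)
    (hint : ∀ p ∈ U, ∀ n < k,
      iteratedDeriv n
        (fun ε : ℂ => intCoeff
          (fun q e => GserGV k G q e * (pdx F q + e * P q))
          (fun q e => GserGV k G q e * (pdy F q + e * Q q))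
          (fun q e => CserGV k R q e) p ε) 0 = 0) :
    ∃ g r nn : ℕ → ℂ × ℂ → ℂ,
      (∀ p, g 0 p = 1) ∧
      (∀ i, 1 ≤ i → i ≤ k → DifferentiableOn ℂ (g i) U ∧ DifferentiableOn ℂ (r i) U ∧
        DifferentiableOn ℂ (nn i) U) ∧
      (∀ i, 1 ≤ i → i ≤ k → ∀ p ∈ U,
        g (i - 1) p * P p = g i p * pdx F p + pdx (r i) p ∧
        g (i - 1) p * Q p = g i p * pdy F p + pdy (r i) p) ∧
      (∀ p ∈ U,
        (∀ n < k + 1,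
          iteratedDeriv n (fun e : ℂ =>
            GserGV k G p e * (pdx F p + e * P p) -
              (1 + ∑ i ∈ Finset.Icc 1 k, e ^ i * nn i p) * pdx (Feps k F r e) p) 0 = 0) ∧
        (∀ n < k + 1,
          iteratedDeriv n (fun e : ℂ =>
            GserGV k G p e * (pdy F p + e * Q p) -
              (1 + ∑ i ∈ Finset.Icc 1 k, e ^ i * nn i p) * pdy (Feps k F r e) p) 0 = 0) ∧
        (∀ n < k,
          iteratedDeriv n (fun e : ℂ =>
            CserGV k R p e -
              (1 + ∑ i ∈ Finset.Icc 1 k, e ^ i * nn i p) *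
                deriv (fun e' : ℂ => Feps k F r e' p) e) 0 = 0)) := by
  simp only [← and_imp, ← Finset.mem_Icc] at hGd hRd
  lift U to Opens (ℂ × ℂ) using hU
  obtain ⟨SG, hSG, hG⟩ := exists_represents_GserGV hGd
  obtain ⟨SC, hC⟩ := exists_represents_CserGV hRd
  obtain ⟨f, hf⟩ := Hol.exists_forall_eq hF
  obtain ⟨u, hu⟩ := Hol.exists_forall_eq hP
  obtain ⟨v, hv⟩ := Hol.exists_forall_eq hQ
  have hfx (p : U) : pdx F p = Hol.dirDeriv (1, 0) f p := (Hol.dirDeriv_apply hf _ p).symm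
  have hfy (p : U) : pdy F p = Hol.dirDeriv (0, 1) f p := (Hol.dirDeriv_apply hf _ p).symm
  have hA := hG.mul ((Represents.const hfx).add (Represents.param.mul (.const hu)))
  have hB := hG.mul ((Represents.const hfy).add (Represents.param.mul (.const hv)))
  obtain ⟨g, r, n, hgr, hn⟩ := exists_isFrancoiseSequence_hasFirstIntegral
    (Hol.dirDeriv_comm (1, 0) (0, 1))
    (Hol.hasDivisionProperty fun p => by simpa only [← hfx, ← hfy] using hdF p p.2) hSG
    ((represents_intCoeff hA hB hC).X_pow_dvd hint)
  refine ⟨fun i => (g i).extend, fun i => (r i).extend, fun i => (n i).extend,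
    fun p => congr(Hol.extend $hgr.zero p).trans (Hol.extend_one p),
    fun i _ _ => ⟨(g i).differentiableOn_extend, (r i).differentiableOn_extend,
      (n i).differentiableOn_extend⟩, fun i hi hik p hp => ?_, fun p hp => ?_⟩ <;>
    lift p to U using hp
  · obtain ⟨j, rfl⟩ := Nat.exists_eq_add_of_le' hi
    simp only [Nat.add_sub_cancel, Hol.extend_apply, hfx, hfy, hu, hv]
    exact ⟨congr($(hgr.x j hik) p), congr($(hgr.y j hik) p)⟩
  · exact hn.iteratedDeriv_eq_zero hA hB hC hf p
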